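/- For multi-indices J, L ∈ {1,...,n}^d of the same type, ∫ u_{1,j_1} ⋯ u_{1,j_d} · conj(u_{1,l_1}) ⋯ conj(u_{1,l_d}) dμ(U) = (∏_m r_m!) / (n(n+1)⋯(n+d−1)), where r_m is the number of occurrences of the value m in J. -/

import Mathlib

open MeasureTheory Matrix

noncomputable instance unitaryGroupMeasurableSpace (n : ℕ) :
    MeasurableSpace (Matrix.unitaryGroup (Fin n) ℂ) := borel _

namespace HaarFirstRow

/-- A left-invariant probability measure on a measurable group is right-invariant. -/
theorem isMulRightInvariant_of_isMulLeftInvariant {G : Type*} [Group G] [MeasurableSpace G]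
    [MeasurableMul₂ G] [MeasurableInv G] (μ : Measure G) [IsProbabilityMeasure μ]
    [μ.IsMulLeftInvariant] : μ.IsMulRightInvariant := by
  have hprob : IsProbabilityMeasure μ.inv :=
    Measure.isProbabilityMeasure_map measurable_inv.aemeasurable
  suffices h : μ.inv = μ by
    have := Measure.inv.instIsMulRightInvariant (μ := μ)
    rwa [h] at this
  refine Measure.ext_of_lintegral _ fun f hf => ?_
  have hswap : ∫⁻ u, ∫⁻ v, f (u * v) ∂μ ∂μ.inv = ∫⁻ v, ∫⁻ u, f (u * v) ∂μ.inv ∂μ :=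
    lintegral_lintegral_swap (hf.comp measurable_mul).aemeasurable
  simpa [lintegral_mul_left_eq_self, lintegral_mul_right_eq_self] using hswap.symm

variable {ι : Type*} [Fintype ι] [DecidableEq ι]

/-- A measure on `ℂ^ι`, carried by the unit sphere, invariant under the right action of the
unitary group on row vectors. -/
structure IsSphereInvariant (ν : Measure (ι → ℂ)) : Prop where
  sum_mul_conj : ∀ᵐ x ∂ν, ∑ m, x m * (starRingEnd ℂ) (x m) = 1
  map_vecMul : ∀ V ∈ Matrix.unitaryGroup ι ℂ, ν.map (fun x => x ᵥ* V) = ν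

/-- The complex reflection fixing `w^⊥` and multiplying the unit vector `w` by `z` is unitary. -/
theorem one_add_smul_vecMulVec_mem_unitaryGroup {z : ℂ} (hz : z * star z = 1) {w : ι → ℂ}
    (hw : star w ⬝ᵥ w = 1) :
    1 + (z - 1) • vecMulVec w (star w) ∈ Matrix.unitaryGroup ι ℂ := by
  rw [Matrix.mem_unitaryGroup_iff, star_eq_conjTranspose]
  have hP : vecMulVec w (star w) * vecMulVec w (star w) = vecMulVec w (star w) := by
    rw [vecMulVec_mul_vecMulVec, hw]; simp
  have hP' : (vecMulVec w (star w))ᴴ = vecMulVec w (star w) := by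
    rw [conjTranspose_vecMulVec, star_star]
  rw [conjTranspose_add, conjTranspose_one, conjTranspose_smul, hP', mul_add, add_mul, add_mul,
    smul_mul_smul_comm, hP, one_mul, one_mul, mul_one, add_assoc, ← add_smul, ← add_smul,
    star_sub, star_one]
  have : z - 1 + (star z - 1 + (z - 1) * (star z - 1)) = 0 := by linear_combination hz
  rw [this, zero_smul, add_zero]

namespace IsSphereInvariant

variable {ν : Measure (ι → ℂ)}

theorem integrable [IsProbabilityMeasure ν] (h : IsSphereInvariant ν) {f : (ι → ℂ) → ℂ}
    (hf : Continuous f) : Integrable f ν := by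
  obtain ⟨C, hC⟩ := (isCompact_closedBall (0 : ι → ℂ) 1).exists_bound_of_continuousOn
    hf.continuousOn
  refine Integrable.of_bound hf.aestronglyMeasurable C ?_
  filter_upwards [h.sum_mul_conj] with x hx
  refine hC x ?_
  rw [mem_closedBall_zero_iff, pi_norm_le_iff_of_nonneg zero_le_one]
  intro m
  have hx' : ∑ m, ‖x m‖ ^ 2 = 1 := by
    simp only [Complex.mul_conj'] at hx
    exact_mod_cast hx
  have := Finset.single_le_sum (f := fun m => ‖x m‖ ^ 2) (fun _ _ => by positivity)
    (Finset.mem_univ m)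
  rw [hx'] at this
  exact (sq_le_one_iff₀ (norm_nonneg _)).1 this

theorem integral_comp_reflection (h : IsSphereInvariant ν) {f : (ι → ℂ) → ℂ} (hf : Continuous f)
    {z : ℂ} (hz : z * star z = 1) {w : ι → ℂ} (hw : star w ⬝ᵥ w = 1) :
    ∫ x, f (x + ((z - 1) * (x ⬝ᵥ w)) • star w) ∂ν = ∫ x, f x ∂ν := by
  conv_rhs => rw [← h.map_vecMul _ (one_add_smul_vecMulVec_mem_unitaryGroup hz hw)]
  rw [integral_map (by fun_prop) hf.aestronglyMeasurable]
  simp [vecMul_add, vecMul_smul, vecMul_vecMulVec, smul_smul]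

theorem integral_eq_zero_of_ne (h : IsSphereInvariant ν) {i j : ι} (hij : i ≠ j)
    {g : (ι → ℂ) → ℂ} (hg : Continuous g)
    (hgij : ∀ x y : ι → ℂ, (∀ m, m ≠ i → m ≠ j → x m = y m) → g x = g y)
    (a b : ℕ) {p q : ℕ} (hpq : p ≠ q) :
    ∫ x, x i ^ a * star (x i) ^ b * (x j ^ p * star (x j) ^ q) * g x ∂ν = 0 := by
  obtain ⟨z, hz, hzpq⟩ : ∃ z : ℂ, z * star z = 1 ∧ z ^ p * star z ^ q = -1 := by
    have hne : ((p : ℂ) - q) ≠ 0 := sub_ne_zero.2 (by exact_mod_cast hpq)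
    have hstar : star (Complex.exp (Real.pi * Complex.I / (p - q)))
        = Complex.exp (-(Real.pi * Complex.I / (p - q))) := by
      rw [Complex.star_def, ← Complex.exp_conj]
      congr 1
      simp
      ring
    refine ⟨Complex.exp (Real.pi * Complex.I / (p - q)), ?_, ?_⟩
    · rw [hstar, ← Complex.exp_add, add_neg_cancel, Complex.exp_zero]
    · rw [hstar, ← Complex.exp_nat_mul, ← Complex.exp_nat_mul, ← Complex.exp_add,
        ← Complex.exp_pi_mul_I]
      congr 1
      field_simp
      ring
  have key := h.integral_comp_reflection
    (f := fun x => x i ^ a * star (x i) ^ b * (x j ^ p * star (x j) ^ q) * g x)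
    (by fun_prop) hz (w := Pi.single j 1) (by simp)
  have hfun : ∀ x : ι → ℂ, (fun x : ι → ℂ =>
      x i ^ a * star (x i) ^ b * (x j ^ p * star (x j) ^ q) * g x)
        (x + ((z - 1) * (x ⬝ᵥ Pi.single j 1)) • star (Pi.single j 1)) =
      -1 * (x i ^ a * star (x i) ^ b * (x j ^ p * star (x j) ^ q) * g x) := by
    intro x
    have hi : (x + ((z - 1) * (x ⬝ᵥ Pi.single j 1)) • star (Pi.single j 1) : ι → ℂ) i = x i := by
      simp [hij]
    have hj : (x + ((z - 1) * (x ⬝ᵥ Pi.single j 1)) • star (Pi.single j 1) : ι → ℂ) j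
        = z * x j := by
      simp; ring
    have hgx := hgij (x + ((z - 1) * (x ⬝ᵥ Pi.single j 1)) • star (Pi.single j 1)) x
      (fun m _ hm => by simp [hm])
    beta_reduce
    rw [hi, hj, hgx, star_mul', mul_pow, mul_pow, ← hzpq]
    ring
  simp_rw [hfun] at key
  rw [integral_const_mul] at key
  linear_combination (-1 / 2 : ℂ) * key

theorem integral_rotation (h : IsSphereInvariant ν) {i j : ι} (hij : i ≠ j)
    {g : (ι → ℂ) → ℂ} (hg : Continuous g)
    (hgij : ∀ x y : ι → ℂ, (∀ m, m ≠ i → m ≠ j → x m = y m) → g x = g y) (s : ℕ) (θ : ℝ) :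
    ∫ x, ((Real.sin θ * x j + Real.cos θ * x i) *
      star (Real.sin θ * x j + Real.cos θ * x i)) ^ s * g x ∂ν =
    ∫ x, (x i * star (x i)) ^ s * g x ∂ν := by
  obtain ⟨φ, rfl⟩ : ∃ φ, θ = 2 * φ := ⟨θ / 2, by ring⟩
  have hsc : (Real.sin φ : ℂ) ^ 2 + (Real.cos φ : ℂ) ^ 2 = 1 := by
    exact_mod_cast Real.sin_sq_add_cos_sq φ
  set w : ι → ℂ := Pi.single i (Real.sin φ : ℂ) - Pi.single j (Real.cos φ : ℂ)
  have hwi : w i = Real.sin φ := by simp [w, hij]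
  have hwj : w j = -Real.cos φ := by simp [w, hij.symm]
  have hwm : ∀ m, m ≠ i → m ≠ j → w m = 0 := fun m hi hj => by simp [w, hi, hj]
  have hdot : ∀ x : ι → ℂ, x ⬝ᵥ w = x i * Real.sin φ - x j * Real.cos φ := fun x => by
    simp [w, dotProduct_sub]
  have hw : star w ⬝ᵥ w = 1 := by
    rw [hdot, Pi.star_apply, Pi.star_apply, hwi, hwj, Complex.star_def, map_neg,
      Complex.conj_ofReal, Complex.conj_ofReal]
    linear_combination hsc
  rw [← h.integral_comp_reflection (f := fun x => (x i * star (x i)) ^ s * g x) (by fun_prop)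
    (z := -1) (by simp) hw]
  congr 1
  ext x
  have hi : (x + ((-1 - 1 : ℂ) * (x ⬝ᵥ w)) • star w) i =
      (Real.sin (2 * φ) : ℂ) * x j + (Real.cos (2 * φ) : ℂ) * x i := by
    rw [Pi.add_apply, Pi.smul_apply, Pi.star_apply, hdot, hwi, Complex.star_def,
      Complex.conj_ofReal, Real.sin_two_mul, Real.cos_two_mul, smul_eq_mul]
    push_cast at hsc ⊢
    linear_combination (-2 * x i) * hsc
  have hgx := hgij (x + ((-1 - 1 : ℂ) * (x ⬝ᵥ w)) • star w) x
    (fun m h₁ h₂ => by simp [hwm m h₁ h₂])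
  rw [hi, hgx]

variable [IsProbabilityMeasure ν]

theorem integral_add_pow (h : IsSphereInvariant ν) {i j : ι} (hij : i ≠ j)
    {g : (ι → ℂ) → ℂ} (hg : Continuous g)
    (hgij : ∀ x y : ι → ℂ, (∀ m, m ≠ i → m ≠ j → x m = y m) → g x = g y) (s : ℕ) (a b : ℝ) :
    ∫ x, ((a * x j + b * x i) * star (a * x j + b * x i)) ^ s * g x ∂ν =
    ∑ k ∈ Finset.range (s + 1), (s.choose k : ℂ) ^ 2 * ((a : ℂ) ^ 2) ^ k * ((b : ℂ) ^ 2) ^ (s - k) *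
      ∫ x, (x i * star (x i)) ^ (s - k) * (x j * star (x j)) ^ k * g x ∂ν := by
  have hexp : ∀ x : ι → ℂ, ((a * x j + b * x i) * star (a * x j + b * x i)) ^ s * g x =
      ∑ k ∈ Finset.range (s + 1), ∑ l ∈ Finset.range (s + 1),
        ((s.choose k : ℂ) * s.choose l * (a : ℂ) ^ (k + l) * (b : ℂ) ^ (s - k + (s - l))) *
        (x i ^ (s - k) * star (x i) ^ (s - l) * (x j ^ k * star (x j) ^ l) * g x) := by
    intro x
    rw [star_add, star_mul', star_mul', mul_pow, add_pow, add_pow, Finset.sum_mul_sum,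
      Finset.sum_mul]
    refine Finset.sum_congr rfl fun k _ => ?_
    rw [Finset.sum_mul]
    refine Finset.sum_congr rfl fun l _ => ?_
    simp only [Complex.star_def, Complex.conj_ofReal]
    ring
  have hint : ∀ k l : ℕ, Integrable (fun x : ι → ℂ =>
      ((s.choose k : ℂ) * s.choose l * (a : ℂ) ^ (k + l) * (b : ℂ) ^ (s - k + (s - l))) *
        (x i ^ (s - k) * star (x i) ^ (s - l) * (x j ^ k * star (x j) ^ l) * g x)) ν :=
    fun k l => h.integrable (by fun_prop)
  simp_rw [hexp]
  rw [integral_finsetSum _ fun k _ => integrable_finsetSum _ fun l _ => hint k l]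
  refine Finset.sum_congr rfl fun k hk => ?_
  rw [integral_finsetSum _ fun l _ => hint k l, Finset.sum_eq_single k]
  · rw [integral_const_mul]
    congr 1
    · ring
    · congr 1
      ext x
      ring
  · intro l _ hl
    rw [integral_const_mul, h.integral_eq_zero_of_ne hij hg hgij _ _ hl.symm, mul_zero]
  · exact fun hk' => absurd hk hk'

theorem choose_mul_integral (h : IsSphereInvariant ν) {i j : ι} (hij : i ≠ j)
    {g : (ι → ℂ) → ℂ} (hg : Continuous g)
    (hgij : ∀ x y : ι → ℂ, (∀ m, m ≠ i → m ≠ j → x m = y m) → g x = g y) {s k : ℕ} (hk : k ≤ s) :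
    (s.choose k : ℂ) * ∫ x, (x i * star (x i)) ^ (s - k) * (x j * star (x j)) ^ k * g x ∂ν =
      ∫ x, (x i * star (x i)) ^ s * g x ∂ν := by
  set N : ℕ → ℂ := fun k =>
    ∫ x, (x i * star (x i)) ^ (s - k) * (x j * star (x j)) ^ k * g x ∂ν with hN
  set A : ℂ := ∫ x, (x i * star (x i)) ^ s * g x ∂ν
  let p : Polynomial ℂ := ∑ k ∈ Finset.range (s + 1),
    Polynomial.monomial k ((s.choose k : ℂ) ^ 2 * N k - A * s.choose k)
  have hroot : ∀ t : ℝ, p.eval ((t : ℂ) ^ 2) = 0 := by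
    intro t
    have hcos : (Real.cos (Real.arctan t) : ℂ) ≠ 0 := by
      exact_mod_cast (Real.cos_arctan_pos t).ne'
    have hsin : (Real.sin (Real.arctan t) : ℂ) = t * Real.cos (Real.arctan t) := by
      have := Real.tan_mul_cos (Real.cos_arctan_pos t).ne'
      rw [Real.tan_arctan] at this
      exact_mod_cast this.symm
    have h1 := (h.integral_add_pow hij hg hgij s (Real.sin (Real.arctan t))
      (Real.cos (Real.arctan t))).symm.trans (h.integral_rotation hij hg hgij s (Real.arctan t))
    have h2 : A = A * ∑ k ∈ Finset.range (s + 1), ((Real.sin (Real.arctan t) : ℂ) ^ 2) ^ k *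
        ((Real.cos (Real.arctan t) : ℂ) ^ 2) ^ (s - k) * (s.choose k : ℂ) := by
      have h3 : (Real.sin (Real.arctan t) : ℂ) ^ 2 + (Real.cos (Real.arctan t) : ℂ) ^ 2 = 1 := by
        exact_mod_cast Real.sin_sq_add_cos_sq (Real.arctan t)
      rw [← add_pow, h3, one_pow, mul_one]
    have h4 : ((Real.cos (Real.arctan t) : ℂ) ^ 2) ^ s * p.eval ((t : ℂ) ^ 2) = 0 := by
      have h5 := sub_eq_zero.2 (h1.trans h2)
      rw [Finset.mul_sum, ← Finset.sum_sub_distrib] at h5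
      rw [Polynomial.eval_finsetSum, Finset.mul_sum, ← h5]
      refine Finset.sum_congr rfl fun k hk => ?_
      obtain ⟨r, hr⟩ := Nat.exists_eq_add_of_le (Nat.lt_succ_iff.1 (Finset.mem_range.1 hk))
      have hr' : s - k = r := by omega
      rw [Polynomial.eval_monomial, hsin]
      simp only [hN, hr']
      rw [hr]
      ring
    exact (mul_eq_zero.1 h4).resolve_left (pow_ne_zero _ (pow_ne_zero _ hcos))
  have hp : p = 0 := by
    refine Polynomial.eq_zero_of_infinite_isRoot p (Set.Infinite.mono
      (s := Set.range fun m : ℕ => ((m : ℝ) : ℂ) ^ 2) ?_ ?_)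
    · rintro _ ⟨m, rfl⟩
      exact hroot m
    · refine Set.infinite_range_of_injective fun m m' hm => ?_
      have : m ^ 2 = m' ^ 2 := by
        have hm' : ((m : ℝ) : ℂ) ^ 2 = ((m' : ℝ) : ℂ) ^ 2 := hm
        exact_mod_cast hm'
      exact Nat.pow_left_injective (n := 2) (by norm_num) this
  have hcoeff : (s.choose k : ℂ) ^ 2 * N k - A * s.choose k = 0 := by
    have := congrArg (fun q => Polynomial.coeff q k) hp
    simpa [p, Polynomial.finsetSum_coeff, Polynomial.coeff_monomial, Nat.lt_succ_iff, hk,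
      Finset.sum_ite_eq'] using this
  have hc : (s.choose k : ℂ) ≠ 0 := by exact_mod_cast (Nat.choose_pos hk).ne'
  exact mul_left_cancel₀ hc (by linear_combination hcoeff)

theorem succ_mul_integral_prod (h : IsSphereInvariant ν) (α : ι → ℕ) (i j : ι) :
    ((α i : ℂ) + 1) * ∫ x, x j * star (x j) * ∏ m, (x m * star (x m)) ^ α m ∂ν =
    ((α j : ℂ) + 1) * ∫ x, x i * star (x i) * ∏ m, (x m * star (x m)) ^ α m ∂ν := by
  rcases eq_or_ne i j with rfl | hij
  · rfl
  set g : (ι → ℂ) → ℂ := fun x => ∏ m ∈ (Finset.univ.erase i).erase j, (x m * star (x m)) ^ α m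
  have hg : Continuous g := by fun_prop
  have hgij : ∀ x y : ι → ℂ, (∀ m, m ≠ i → m ≠ j → x m = y m) → g x = g y := by
    intro x y hxy
    refine Finset.prod_congr rfl fun m hm => ?_
    simp only [Finset.mem_erase] at hm
    rw [hxy m hm.2.1 hm.1]
  have hprod : ∀ x : ι → ℂ, ∏ m, (x m * star (x m)) ^ α m =
      (x i * star (x i)) ^ α i * ((x j * star (x j)) ^ α j * g x) := fun x => by
    rw [← Finset.mul_prod_erase _ _ (Finset.mem_univ i),
      ← Finset.mul_prod_erase _ _ (Finset.mem_erase.2 ⟨hij.symm, Finset.mem_univ j⟩)]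
  have hj := h.choose_mul_integral hij hg hgij (s := α i + α j + 1) (k := α j + 1) (by omega)
  have hi := h.choose_mul_integral hij hg hgij (s := α i + α j + 1) (k := α j) (by omega)
  rw [show α i + α j + 1 - (α j + 1) = α i by omega] at hj
  rw [show α i + α j + 1 - α j = α i + 1 by omega] at hi
  have hchoose : ((α i + α j + 1).choose (α j + 1) : ℂ) * (α j + 1) =
      (α i + α j + 1).choose (α j) * (α i + 1) := by
    have := Nat.choose_succ_right_eq (α i + α j + 1) (α j)
    rw [show α i + α j + 1 - α j = α i + 1 by omega] at this
    exact_mod_cast this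
  have hc : ((α i + α j + 1).choose (α j) : ℂ) ≠ 0 := by
    exact_mod_cast (Nat.choose_pos (by omega)).ne'
  have ej : ∀ x : ι → ℂ, x j * star (x j) * ∏ m, (x m * star (x m)) ^ α m =
      (x i * star (x i)) ^ α i * (x j * star (x j)) ^ (α j + 1) * g x := fun x => by
    rw [hprod]; ring
  have ei : ∀ x : ι → ℂ, x i * star (x i) * ∏ m, (x m * star (x m)) ^ α m =
      (x i * star (x i)) ^ (α i + 1) * (x j * star (x j)) ^ α j * g x := fun x => by
    rw [hprod]; ring
  simp_rw [ei, ej]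
  refine mul_left_cancel₀ hc ?_
  linear_combination (-∫ x, (x i * star (x i)) ^ α i * (x j * star (x j)) ^ (α j + 1) * g x ∂ν) *
    hchoose + ((α j : ℂ) + 1) * (hj - hi)

theorem sum_integral_mul (h : IsSphereInvariant ν) {f : (ι → ℂ) → ℂ} (hf : Continuous f) :
    ∑ m, ∫ x, x m * star (x m) * f x ∂ν = ∫ x, f x ∂ν := by
  rw [← integral_finsetSum _ fun m _ => h.integrable (by fun_prop)]
  refine integral_congr_ae ?_
  filter_upwards [h.sum_mul_conj] with x hx
  rw [← Finset.sum_mul]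
  exact (congrArg (· * f x) hx).trans (one_mul _)

theorem integral_prod_pow (h : IsSphereInvariant ν) (d : ℕ) (α : ι → ℕ) (hα : ∑ m, α m = d) :
    ∫ x, ∏ m, (x m * star (x m)) ^ α m ∂ν =
      (∏ m, ((α m).factorial : ℂ)) / ∏ k ∈ Finset.range d, ((Fintype.card ι : ℂ) + k) := by
  induction d generalizing α with
  | zero =>
    have : ∀ m, α m = 0 := by simpa using hα
    simp [this]
  | succ d ih =>
    obtain ⟨i, hi⟩ : ∃ i, α i ≠ 0 := by
      by_contra! hα'
      simp [hα'] at hα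
    obtain ⟨β, rfl⟩ : ∃ β : ι → ℕ, α = β + Pi.single i 1 := by
      refine ⟨α - Pi.single i 1, ?_⟩
      ext m
      rcases eq_or_ne m i with rfl | hm
      · simp; omega
      · simp [hm]
    have hβ : ∑ m, β m = d := by
      simpa [Finset.sum_add_distrib] using hα
    have hsum := h.sum_integral_mul (f := fun x => ∏ m, (x m * star (x m)) ^ β m) (by fun_prop)
    have hrec : ((β i : ℂ) + 1) * ∫ x, ∏ m, (x m * star (x m)) ^ β m ∂ν =
        ((Fintype.card ι : ℂ) + d) *
          ∫ x, x i * star (x i) * ∏ m, (x m * star (x m)) ^ β m ∂ν := by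
      rw [← hsum, Finset.mul_sum, Finset.sum_congr rfl fun m _ => h.succ_mul_integral_prod β i m,
        ← Finset.sum_mul, Finset.sum_add_distrib, ← hβ]
      congr 1
      simp [add_comm]
    have hpow : ∀ x : ι → ℂ, ∏ m, (x m * star (x m)) ^ (β + Pi.single i 1 : ι → ℕ) m =
        x i * star (x i) * ∏ m, (x m * star (x m)) ^ β m := by
      intro x
      simp_rw [Pi.add_apply, pow_add, Finset.prod_mul_distrib]
      rw [mul_comm]
      congr 1
      rw [Finset.prod_eq_single i] <;> simp +contextual
    have hfact : ∏ m, (((β + Pi.single i 1 : ι → ℕ) m).factorial : ℂ) =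
        (β i + 1) * ∏ m, ((β m).factorial : ℂ) := by
      rw [← Finset.mul_prod_erase _ _ (Finset.mem_univ i),
        ← Finset.mul_prod_erase _ (fun m => ((β m).factorial : ℂ)) (Finset.mem_univ i),
        ← mul_assoc]
      congr 1
      · simp [Nat.factorial_succ]
      · refine Finset.prod_congr rfl fun m hm => ?_
        simp [Finset.ne_of_mem_erase hm]
    have hcard : 0 < Fintype.card ι := Fintype.card_pos_iff.2 ⟨i⟩
    have hne : ∀ k : ℕ, ((Fintype.card ι : ℂ) + k) ≠ 0 := fun k => by
      exact_mod_cast (Nat.add_pos_left hcard k).ne'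
    have hne' : ∏ k ∈ Finset.range d, ((Fintype.card ι : ℂ) + k) ≠ 0 :=
      Finset.prod_ne_zero_iff.2 fun k _ => hne k
    simp_rw [hpow]
    rw [hfact, Finset.prod_range_succ, eq_div_iff (mul_ne_zero hne' (hne d))]
    rw [ih β hβ] at hrec
    field_simp at hrec
    linear_combination -hrec

end IsSphereInvariant

theorem continuous_row {n : ℕ} (i : Fin n) :
    Continuous fun (U : Matrix.unitaryGroup (Fin n) ℂ) j => (U : Matrix (Fin n) (Fin n) ℂ) i j :=
  continuous_pi fun j => continuous_subtype_val.matrix_elem i j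

/-- Under a left-invariant probability measure on the unitary group, the law of any row is
invariant. -/
theorem isSphereInvariant_map_row {n : ℕ} (μ : Measure (Matrix.unitaryGroup (Fin n) ℂ))
    [IsProbabilityMeasure μ]
    (hinv : ∀ V : Matrix.unitaryGroup (Fin n) ℂ, μ.map (fun U => V * U) = μ) (i : Fin n) :
    IsSphereInvariant (μ.map fun (U : Matrix.unitaryGroup (Fin n) ℂ) j =>
      (U : Matrix (Fin n) (Fin n) ℂ) i j) := by
  have : BorelSpace (Matrix.unitaryGroup (Fin n) ℂ) := ⟨rfl⟩
  have : SecondCountableTopology (Matrix (Fin n) (Fin n) ℂ) :=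
    inferInstanceAs (SecondCountableTopology (Fin n → Fin n → ℂ))
  have : SecondCountableTopology (Matrix.unitaryGroup (Fin n) ℂ) :=
    TopologicalSpace.Subtype.secondCountableTopology _
  have : μ.IsMulLeftInvariant := ⟨hinv⟩
  have hright := isMulRightInvariant_of_isMulLeftInvariant μ
  have hrow : Measurable fun (U : Matrix.unitaryGroup (Fin n) ℂ) j =>
      (U : Matrix (Fin n) (Fin n) ℂ) i j :=
    (continuous_row _).measurable
  refine ⟨?_, fun V hV => ?_⟩
  · refine (ae_map_iff hrow.aemeasurable
      (measurableSet_eq_fun (Continuous.measurable (by fun_prop)) measurable_const)).2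
        (Filter.Eventually.of_forall ?_)
    intro U
    have := congrFun (congrFun (Matrix.mem_unitaryGroup_iff.1 U.2) i) i
    simpa [Matrix.mul_apply, Matrix.star_apply] using this
  · have hV' : Measurable fun x : Fin n → ℂ => x ᵥ* V :=
      (Continuous.matrix_vecMul continuous_id continuous_const).measurable
    rw [Measure.map_map hV' hrow]
    conv_rhs => rw [← map_mul_right_eq_self μ ⟨V, hV⟩]
    rw [Measure.map_map hrow (measurable_mul_const _)]
    rfl

end HaarFirstRow

/-- If the multi-indices `J` and `L` (with entries in `{1,…,n}`) are of the same type, then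
`∫ u_{1,j_1} ⋯ u_{1,j_d} conj(u_{1,l_1}) ⋯ conj(u_{1,l_d}) dμ(U)
  = (∏_m r_m!) / (n(n+1)⋯(n+d−1))`,
where `r_m` is the number of occurrences of the value `m` in `J`, for the normalized Haar
measure `μ` on `U_n`. -/
theorem haar_integral_first_row_same_type
    (n d : ℕ) (hn : 0 < n) (μ : Measure (Matrix.unitaryGroup (Fin n) ℂ))
    [IsProbabilityMeasure μ]
    (hinv : ∀ V : Matrix.unitaryGroup (Fin n) ℂ, μ.map (fun U => V * U) = μ)
    (J L : Fin d → Fin n)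
    (htype : ∃ σ : Equiv.Perm (Fin d), ∀ k, J (σ k) = L k) :
    (∫ U : Matrix.unitaryGroup (Fin n) ℂ,
        (∏ k : Fin d, (U : Matrix (Fin n) (Fin n) ℂ) ⟨0, hn⟩ (J k)) *
        (∏ k : Fin d, (starRingEnd ℂ) ((U : Matrix (Fin n) (Fin n) ℂ) ⟨0, hn⟩ (L k))) ∂μ) =
      (∏ m : Fin n, (Nat.factorial (Finset.univ.filter (fun k => J k = m)).card : ℂ)) /
        (∏ k ∈ Finset.range d, ((n : ℂ) + k)) := by
  obtain ⟨σ, hσ⟩ := htype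
  have hsph := HaarFirstRow.isSphereInvariant_map_row μ hinv ⟨0, hn⟩
  have hrow : Measurable fun (U : Matrix.unitaryGroup (Fin n) ℂ) j =>
      (U : Matrix (Fin n) (Fin n) ℂ) ⟨0, hn⟩ j := by
    have : BorelSpace (Matrix.unitaryGroup (Fin n) ℂ) := ⟨rfl⟩
    exact (HaarFirstRow.continuous_row _).measurable
  have hprob := Measure.isProbabilityMeasure_map (μ := μ) hrow.aemeasurable
  have hcard : ∑ m, (Finset.univ.filter (fun k => J k = m)).card = d := by
    rw [← Finset.card_eq_sum_card_fiberwise (fun _ _ => Finset.mem_coe.2 (Finset.mem_univ _))]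
    simp
  have key := hsph.integral_prod_pow d _ hcard
  rw [integral_map hrow.aemeasurable
    (Continuous.aestronglyMeasurable (by fun_prop)), Fintype.card_fin] at key
  rw [← key]
  congr 1
  ext U
  have hperm : ∏ k, (starRingEnd ℂ) ((U : Matrix (Fin n) (Fin n) ℂ) ⟨0, hn⟩ (L k)) =
      ∏ k, (starRingEnd ℂ) ((U : Matrix (Fin n) (Fin n) ℂ) ⟨0, hn⟩ (J k)) := by
    simp_rw [← hσ]
    exact Equiv.prod_comp σ fun k =>
      (starRingEnd ℂ) ((U : Matrix (Fin n) (Fin n) ℂ) ⟨0, hn⟩ (J k))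
  rw [hperm, ← Finset.prod_mul_distrib]
  exact (Finset.prod_comp (fun m => (U : Matrix (Fin n) (Fin n) ℂ) ⟨0, hn⟩ m *
    star ((U : Matrix (Fin n) (Fin n) ℂ) ⟨0, hn⟩ m)) J).trans
      (Finset.prod_subset (Finset.subset_univ _) fun m _ hm => by
        simp only [Finset.mem_image, Finset.mem_univ, true_and, not_exists] at hm
        simp [hm])
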